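/- Assume cov(M) > ℵ₁. Then there is a countably tight topological space X such that χ(X) < cov(M) and player II does not have a winning strategy in the game G1(Ω_x, Ω_x) for any point x ∈ X. -/

import Mathlib

/-!
Let `Y` be a set of `ℵ₁` reals. The witness is `C_p(Y)`, the (nonempty, Hausdorff) space of
continuous functions `Y → ℝ` with the topology of pointwise convergence.

* It has character at most `ℵ₁`: a basic neighbourhood of `f` is given by a finite subset of `Y`
  and an `ε = 1 / (k + 1)`.
* It is countably tight because all finite powers `Yⁿ` are Lindelöf: if `f ∈ cl A`, then for fixed
  `n` and `k` the open sets `{v ∈ Yⁿ | ∀ i, |g (v i) - f (v i)| < 1 / (k + 1)}`, `g ∈ A`,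
  cover `Yⁿ`; the union over `n, k` of countable subcovers is the required countable set.
* Player II has no winning strategy at any `f`. Fix a strategy. At every position there is a finite
  `K ⊆ Y` such that each neighbourhood `U` of `K` contains the set `{y | |g y - f y| < 1}` for
  some answer `g` of the strategy to a legal move (`exists_finite_kernel`): otherwise choose a bad
  `U_K` for every `K`, and let player I play functions `g_K` that agree with `f` on `K` and with
  `f + 1` off `U_K`. Restricting `U` to the thickenings of `K` of radius `1 / (m + 1)` gives a
  countable tree of positions, hence countably many sets `K`. As `Y` is uncountable, some `y` is in
  none of them, and player I can follow a branch of the tree along which all answers `g`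
  satisfy `|g y - f y| ≥ 1`.
-/

open Set Topology Cardinal

/-- `Ω_x`: the collection of all sets `A ⊆ X` such that `x ∉ A` and `x ∈ cl A`. -/
def OmegaAt {X : Type*} [TopologicalSpace X] (x : X) : Set (Set X) :=
  {A | x ∉ A ∧ x ∈ closure A}

/-- Player II has a winning strategy in the single-selection game `G₁(𝒜, ·)`: to each
nonempty finite sequence of moves of player I (members of `𝒜`) the strategy assigns an
element of the last move, and the set of all selections along any run satisfies `Win`. -/
def HasWinningStrategyII {α : Type*} (𝒜 : Set (Set α)) (Win : Set α → Prop) : Prop :=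
  ∃ F : (n : ℕ) → (Fin (n + 1) → Set α) → α,
    (∀ (n : ℕ) (D : Fin (n + 1) → Set α), (∀ i, D i ∈ 𝒜) → F n D ∈ D (Fin.last n)) ∧
    ∀ D : ℕ → Set α, (∀ n, D n ∈ 𝒜) → Win {y | ∃ n : ℕ, y = F n fun i => D i.val}

/-- `X` has countable tightness at `x`. -/
def CountablyTightAt (X : Type*) [TopologicalSpace X] (x : X) : Prop :=
  ∀ A : Set X, x ∈ closure A → ∃ B ⊆ A, B.Countable ∧ x ∈ closure B

/-- `cov(M)`: the least cardinality of a family of meager subsets of `ℝ` covering `ℝ`. -/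
noncomputable def covMeager : Cardinal :=
  sInf {c | ∃ S : Set (Set ℝ), (∀ s ∈ S, IsMeagre s) ∧ ⋃₀ S = Set.univ ∧ #S = c}

/-- `χ(x, X)`: the least cardinality of a local base at `x`. -/
noncomputable def charAt (X : Type*) [TopologicalSpace X] (x : X) : Cardinal :=
  sInf {c | ∃ B : Set (Set X), (∀ U ∈ B, IsOpen U ∧ x ∈ U) ∧
    (∀ V : Set X, IsOpen V → x ∈ V → ∃ U ∈ B, U ⊆ V) ∧ #B = c}

/-- `χ(X) = sup {χ(x, X) : x ∈ X}`. -/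
noncomputable def charSpace (X : Type*) [TopologicalSpace X] : Cardinal :=
  ⨆ x : X, charAt X x

/-- `C_p(Y)`: the continuous real functions on `Y`, with the topology of pointwise convergence
(the subspace topology from the product `Y → ℝ`). -/
abbrev Cp (Y : Type) [TopologicalSpace Y] : Type := {g : Y → ℝ // Continuous g}

/-- The basic neighbourhood of `f` in `C_p(Y)` given by a finite set `K` and `ε = 1 / (k + 1)`. -/
def cpNhd {Y : Type} [TopologicalSpace Y] (f : Cp Y) (K : Finset Y) (k : ℕ) : Set (Cp Y) :=
  {g | ∀ y ∈ K, |g.1 y - f.1 y| < 1 / ((k : ℝ) + 1)}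

theorem isOpen_cpNhd {Y : Type} [TopologicalSpace Y] (f : Cp Y) (K : Finset Y) (k : ℕ) :
    IsOpen (cpNhd f K k) := by
  have h : cpNhd f K k = ⋂ y ∈ K, {g : Cp Y | |g.1 y - f.1 y| < 1 / ((k : ℝ) + 1)} := by
    ext g; simp [cpNhd]
  rw [h]
  refine isOpen_biInter_finset fun y _ => ?_
  have hc : Continuous fun g : Cp Y => g.1 y := (continuous_apply y).comp continuous_subtype_val
  exact isOpen_lt (hc.sub continuous_const).abs continuous_const

theorem mem_cpNhd_self {Y : Type} [TopologicalSpace Y] (f : Cp Y) (K : Finset Y) (k : ℕ) :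
    f ∈ cpNhd f K k := by
  intro y _
  simp only [sub_self, abs_zero]
  positivity

theorem exists_cpNhd_subset {Y : Type} [TopologicalSpace Y] (f : Cp Y) (V : Set (Cp Y))
    (hV : IsOpen V) (hf : f ∈ V) : ∃ K k, cpNhd f K k ⊆ V := by
  obtain ⟨W, hW, rfl⟩ := isOpen_induced_iff.1 hV
  obtain ⟨K, u, hu, hsub⟩ := isOpen_pi_iff.1 hW f.1 hf
  have h1 : ∀ y ∈ K, ∃ ε > 0, Metric.ball (f.1 y) ε ⊆ u y := fun y hy =>
    Metric.isOpen_iff.1 (hu y hy).1 _ (hu y hy).2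
  choose! ε hε hball using h1
  have h2 : ∃ k : ℕ, ∀ y ∈ K, 1 / ((k : ℝ) + 1) < ε y := by
    have : ∀ᶠ k : ℕ in Filter.atTop, ∀ y ∈ K, 1 / ((k : ℝ) + 1) < ε y := by
      rw [Filter.eventually_all_finset]
      intro y hy
      exact tendsto_one_div_add_atTop_nhds_zero_nat.eventually (gt_mem_nhds (hε y hy))
    exact this.exists
  obtain ⟨k, hk⟩ := h2
  refine ⟨K, k, fun g hg => hsub fun y hy => hball y hy ?_⟩
  rw [Metric.mem_ball, Real.dist_eq]
  exact (hg y hy).trans (hk y hy)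

theorem mem_closure_cp {Y : Type} [TopologicalSpace Y] (f : Cp Y) (A : Set (Cp Y)) :
    f ∈ closure A ↔ ∀ K k, ∃ g ∈ A, g ∈ cpNhd f K k := by
  rw [mem_closure_iff]
  constructor
  · intro h K k
    obtain ⟨g, hg, hA⟩ := h _ (isOpen_cpNhd f K k) (mem_cpNhd_self f K k)
    exact ⟨g, hA, hg⟩
  · intro h V hV hf
    obtain ⟨K, k, hK⟩ := exists_cpNhd_subset f V hV hf
    obtain ⟨g, hA, hg⟩ := h K k
    exact ⟨g, hK hg, hA⟩

theorem countablyTightAt_cp {Y : Type} [TopologicalSpace Y] [SecondCountableTopology Y]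
    (f : Cp Y) : CountablyTightAt (Cp Y) f := by
  intro A hA
  rw [mem_closure_cp] at hA
  let U (n k : ℕ) (g : A) : Set (Fin n → Y) :=
    {v | ∀ i, |g.1.1 (v i) - f.1 (v i)| < 1 / ((k : ℝ) + 1)}
  have hU : ∀ n k g, IsOpen (U n k g) := by
    intro n k g
    have h : U n k g = ⋂ i, {v | |g.1.1 (v i) - f.1 (v i)| < 1 / ((k : ℝ) + 1)} := by
      ext v; simp [U]
    rw [h]
    refine isOpen_iInter_of_finite fun i => isOpen_lt (Continuous.abs ?_) continuous_const
    exact (g.1.2.comp (continuous_apply i)).sub (f.2.comp (continuous_apply i))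
  have hT : ∀ n k, ∃ T : Set A, T.Countable ∧ ⋃ g ∈ T, U n k g = ⋃ g, U n k g :=
    fun n k => TopologicalSpace.isOpen_iUnion_countable _ (hU n k)
  choose T hTc hTU using hT
  refine ⟨⋃ n, ⋃ k, Subtype.val '' T n k, ?_, ?_, ?_⟩
  · simp only [iUnion_subset_iff]
    rintro n k _ ⟨g, _, rfl⟩
    exact g.2
  · exact countable_iUnion fun n => countable_iUnion fun k => (hTc n k).image _
  · rw [mem_closure_cp]
    intro K k
    -- an enumeration of `K` is a point of `Y ^ |K|`
    let v : Fin K.card → Y := fun i => (K.equivFin.symm i).1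
    have hv : v ∈ ⋃ g, U K.card k g := by
      obtain ⟨g, hg, hgK⟩ := hA K k
      exact mem_iUnion.2 ⟨⟨g, hg⟩, fun i => hgK _ (K.equivFin.symm i).2⟩
    rw [← hTU] at hv
    simp only [mem_iUnion] at hv
    obtain ⟨g, hgT, hg⟩ := hv
    refine ⟨g.1, mem_iUnion.2 ⟨_, mem_iUnion.2 ⟨k, g, hgT, rfl⟩⟩, fun y hy => ?_⟩
    simpa [v] using hg (K.equivFin ⟨y, hy⟩)

theorem charSpace_cp_le {Y : Type} [TopologicalSpace Y] [Infinite Y] :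
    charSpace (Cp Y) ≤ #Y := by
  refine ciSup_le' fun f => ?_
  have hB : charAt (Cp Y) f ≤ #(range fun p : Finset Y × ℕ => cpNhd f p.1 p.2) := by
    refine csInf_le' ⟨_, ?_, ?_, rfl⟩
    · rintro _ ⟨p, rfl⟩
      exact ⟨isOpen_cpNhd f _ _, mem_cpNhd_self f _ _⟩
    · intro V hV hf
      obtain ⟨K, k, h⟩ := exists_cpNhd_subset f V hV hf
      exact ⟨_, ⟨(K, k), rfl⟩, h⟩
  refine hB.trans (mk_range_le.trans ?_)
  rw [mk_prod, lift_id, lift_id, mk_finset_of_infinite, mk_nat]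
  exact (mul_eq_left (aleph0_le_mk Y) (aleph0_le_mk Y) aleph0_ne_zero).le

/-- The move of player I used against a family of neighbourhoods: if every finite `K` has an open
neighbourhood `U K ≠ Y`, there is a set in `Ω_f` all of whose members `g` satisfy
`{y | |g y - f y| < 1} ⊆ U K` for some `K`. -/
theorem exists_omega_move {Y : Type} [MetricSpace Y] (f : Cp Y) (U : Finset Y → Set Y)
    (hU : ∀ K, IsOpen (U K)) (hK : ∀ K : Finset Y, (K : Set Y) ⊆ U K) (hne : ∀ K, U K ≠ Set.univ) :
    ∃ D ∈ OmegaAt f, ∀ g ∈ D, ∃ K, {y | |g.1 y - f.1 y| < 1} ⊆ U K := by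
  have h1 : ∀ K : Finset Y, ∃ g : Cp Y, (∀ y ∈ K, g.1 y = f.1 y) ∧ ∀ y ∉ U K, g.1 y = f.1 y + 1 := by
    intro K
    obtain ⟨u, hu0, hu1, -⟩ := exists_continuous_zero_one_of_isClosed
      K.finite_toSet.isClosed (hU K).isClosed_compl
      (disjoint_compl_right_iff_subset.2 (hK K))
    refine ⟨⟨fun y => f.1 y + u y, f.2.add u.continuous⟩, fun y hy => ?_, fun y hy => ?_⟩
    · simp [hu0 (Finset.mem_coe.2 hy)]
    · simp [hu1 (mem_compl hy)]
  choose g hg0 hg1 using h1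
  refine ⟨range g, ⟨?_, ?_⟩, ?_⟩
  · rintro ⟨K, h⟩
    obtain ⟨z, hz⟩ := (ne_univ_iff_exists_notMem _).1 (hne K)
    have := hg1 K z hz
    rw [h] at this
    linarith
  · rw [mem_closure_cp]
    refine fun K k => ⟨g K, ⟨K, rfl⟩, fun y hy => ?_⟩
    rw [hg0 K y hy, sub_self, abs_zero]
    positivity
  · rintro _ ⟨K, rfl⟩
    refine ⟨K, fun y hy => ?_⟩
    by_contra hyU
    rw [mem_ofPred_eq, hg1 K y hyU] at hy
    simp at hy

/-- The finite set attached to a position. Here `r` is the answer function of player II at that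
position: it picks an element of each legal move. -/
theorem exists_finite_kernel {Y : Type} [MetricSpace Y] [Infinite Y] (f : Cp Y)
    (r : OmegaAt f → Cp Y) (hr : ∀ D, r D ∈ D.1) :
    ∃ K : Finset Y, ∀ U : Set Y, IsOpen U → (K : Set Y) ⊆ U →
      ∃ D, {y | |(r D).1 y - f.1 y| < 1} ⊆ U := by
  by_contra! hcon
  choose U hUo hKU hbad using hcon
  choose z hz using fun K : Finset Y => Infinite.exists_notMem_finset K
  -- removing a point off `K` makes the bad neighbourhood of `K` proper, and keeps it bad
  obtain ⟨D, hD, hDU⟩ := exists_omega_move f (fun K => U K \ {z K})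
    (fun K => (hUo K).sdiff isClosed_singleton)
    (fun K y hy => ⟨hKU K hy, fun h => hz K (by rw [← mem_singleton_iff.1 h]; exact hy)⟩)
    (fun K h => (h ▸ mem_univ (z K) : z K ∈ U K \ {z K}).2 rfl)
  obtain ⟨K, hK⟩ := hDU _ (hr ⟨D, hD⟩)
  exact hbad K ⟨D, hD⟩ (hK.trans sdiff_subset)

theorem omegaAt_nonempty {Y : Type} [MetricSpace Y] [Infinite Y] (f : Cp Y) :
    (OmegaAt f).Nonempty := by
  choose z hz using fun K : Finset Y => Infinite.exists_notMem_finset K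
  obtain ⟨D, hD, -⟩ := exists_omega_move f (fun K => {z K}ᶜ) (fun K => isOpen_compl_singleton)
    (fun K y hy h => hz K (by rw [← mem_singleton_iff.1 h]; exact hy))
    (fun K h => (h ▸ mem_univ (z K) : z K ∈ ({z K}ᶜ : Set Y)) rfl)
  exact ⟨D, hD⟩

/-- The position reached from the choice `C` of moves (by length, position and index) along a finite sequence of indices, the most
recent index first. A position of length `n` is encoded by an infinite sequence of
moves of which only the first `n` terms matter. -/
def treeNode {α : Type} (D₀ : α) (C : ℕ → (ℕ → α) → ℕ → α) : List ℕ → ℕ → α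
  | [] => fun _ => D₀
  | m :: l => Function.update (treeNode D₀ C l) l.length (C l.length (treeNode D₀ C l) m)

/-- The initial segment of length `n`, most recent index first, of the branch that continues
each `l` on it by the index `m l`. -/
def branch (m : List ℕ → ℕ) : ℕ → List ℕ
  | 0 => []
  | n + 1 => m (branch m n) :: branch m n

theorem length_branch (m : List ℕ → ℕ) (n : ℕ) : (branch m n).length = n := by
  induction n with
  | zero => rfl
  | succ n ih => simp [branch, ih]

theorem treeNode_branch_stable {α : Type} (D₀ : α) (C : ℕ → (ℕ → α) → ℕ → α) (m : List ℕ → ℕ)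
    {i n : ℕ} (h : i < n) :
    treeNode D₀ C (branch m n) i = treeNode D₀ C (branch m (i + 1)) i := by
  induction n, h using Nat.le_induction with
  | base => rfl
  | succ n hn ih =>
    rw [← ih]
    change Function.update _ _ _ i = _
    rw [Function.update_of_ne]
    rw [length_branch]
    omega

theorem not_hasWinningStrategyII_cp {Y : Type} [MetricSpace Y] [Uncountable Y] (f : Cp Y) :
    ¬ HasWinningStrategyII (OmegaAt f) (fun S => f ∈ closure S) := by
  rintro ⟨F, hF, hwin⟩
  obtain ⟨D₀, hD₀⟩ := omegaAt_nonempty f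
  have hkey : ∀ (n : ℕ) (P : ℕ → OmegaAt f), ∃ K : Finset Y, ∀ m : ℕ, ∃ C : OmegaAt f,
      {y | |(F n fun i => (Function.update P n C i.val).1).1 y - f.1 y| < 1} ⊆
        Metric.thickening (1 / ((m : ℝ) + 1)) (K : Set Y) := by
    intro n P
    obtain ⟨K, hK⟩ := exists_finite_kernel f
      (fun C => F n fun i => (Function.update P n C i.val).1) (fun C => by
        have := hF n (fun i => (Function.update P n C i.val).1) fun i => Subtype.property _
        simpa using this)
    exact ⟨K, fun m => hK _ Metric.isOpen_thickening
      (Metric.self_subset_thickening (by positivity) _)⟩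
  choose K C hC using hkey
  let node : List ℕ → ℕ → OmegaAt f := treeNode ⟨D₀, hD₀⟩ C
  obtain ⟨y, hy⟩ : ∃ y, y ∉ ⋃ l : List ℕ, (K l.length (node l) : Set Y) := by
    by_contra! hall
    refine not_countable_univ (α := Y) ((countable_iUnion fun l : List ℕ =>
      (K l.length (node l)).countable_toSet).mono fun y _ => hall y)
  have hm : ∀ l : List ℕ, ∃ m : ℕ,
      y ∉ Metric.thickening (1 / ((m : ℝ) + 1)) (K l.length (node l) : Set Y) := by
    intro l
    have hyl : y ∉ (K l.length (node l) : Set Y) := fun h => hy (mem_iUnion.2 ⟨l, h⟩)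
    by_contra! hall
    refine hyl ?_
    rw [← (K l.length (node l)).finite_toSet.isClosed.closure_eq, Metric.mem_closure_iff]
    intro ε hε
    obtain ⟨m, hm⟩ := exists_nat_one_div_lt hε
    obtain ⟨b, hb, hlt⟩ := Metric.mem_thickening_iff.1 (hall m)
    exact ⟨b, hb, hlt.trans hm⟩
  choose m hm using hm
  have hcl : f ∈ closure _ :=
    hwin (fun n => (node (branch m (n + 1)) n).1) fun n => Subtype.property _
  rw [mem_closure_cp] at hcl
  obtain ⟨g, ⟨n, rfl⟩, hg⟩ := hcl {y} 0
  have hgy := hg y (Finset.mem_singleton_self y)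
  -- the first `n + 1` moves of the run form the node of length `n + 1` on the branch
  have hrun : (fun i : Fin (n + 1) => (node (branch m (i.val + 1)) i.val).1) = fun i =>
      (Function.update (node (branch m n)) n (C n (node (branch m n)) (m (branch m n))) i.val).1 := by
    funext i
    have h1 := treeNode_branch_stable (⟨D₀, hD₀⟩ : OmegaAt f) C m i.2
    have h2 : node (branch m (n + 1)) =
        Function.update (node (branch m n)) n (C n (node (branch m n)) (m (branch m n))) := by
      have h3 : node (branch m (n + 1)) = Function.update (node (branch m n)) (branch m n).length
          (C (branch m n).length (node (branch m n)) (m (branch m n))) := rfl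
      rw [h3, length_branch]
    rw [← h2]
    exact congrArg Subtype.val h1.symm
  rw [hrun] at hgy
  have hmem := hC n (node (branch m n)) (m (branch m n))
    (show y ∈ {y | _ < _} by simpa using hgy)
  have hnot := hm (branch m n)
  rw [length_branch] at hnot
  exact hnot hmem

/-- assuming `cov(M) > ℵ₁`, there is a countably tight space `X` with
`χ(X) < cov(M)` in which player II has no winning strategy in `G₁(Ω_x, Ω_x)` at any point. -/
theorem statement15 (h : Cardinal.aleph 1 < covMeager) :
    ∃ (X : Type) (_ : TopologicalSpace X),
      (∀ x : X, CountablyTightAt X x) ∧ charSpace X < covMeager ∧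
      ∀ x : X, ¬ HasWinningStrategyII (OmegaAt x) (fun S => x ∈ closure S) := by
  obtain ⟨Y, hY⟩ := le_mk_iff_exists_set.1 (aleph_one_le_continuum.trans_eq mk_real.symm)
  have : Uncountable Y := by
    rw [← aleph0_lt_mk_iff, hY]
    exact aleph0_lt_aleph_one
  exact ⟨Cp Y, inferInstance, countablyTightAt_cp,
    (charSpace_cp_le.trans_eq hY).trans_lt h, not_hasWinningStrategyII_cp⟩
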